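/- Let κ be a (P,ρ)-kernel on a locally finite weakly ranked poset (P,ρ), and let F and G be the right and left augmented Chow functions. Then: (i) for every s ≤ t, the coefficient of x^{ρ_{st}} in F_{st}(x), in G_{st}(x), and in κ_{st}(x) all coincide; in particular if κ is non-degenerate (deg κ_{st} = ρ_{st} for all s ≤ t) then deg F_{st} = deg G_{st} = ρ_{st} for every s ≤ t; (ii) F^rev = F and G^rev = G, i.e. F_{st}(x) = x^{ρ_{st}} F_{st}(1/x) and G_{st}(x) = x^{ρ_{st}} G_{st}(1/x) for every s ≤ t. -/

import Mathlib

/-!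
Everything takes place in the incidence algebra, where `rev` is multiplicative on `I_ρ(P)` because
`ρ` is additive. At `x = 1` the identity `κ κ^rev = δ` says that the unipotent element `κ(1)` is an
involution, hence `κ(1) = δ` as the coefficients are torsion-free. So `κ = x δ + (x - 1) κ̄`, and
`κ̄ ℋ = ℋ κ̄ = -δ` becomes `κ ℋ + x δ = x ℋ + δ = ℋ κ + x δ`.

Reversing the first equation with respect to `ρ + 1` gives `ℋ^rev + x δ = δ + x κ^rev ℋ^rev`.
Multiplying this by `ℋ κ` on the left, comparing with `(ℋ κ + x δ) ℋ^rev = (x ℋ + δ) ℋ^rev` and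
cancelling `x - 1` yields `ℋ^rev = ℋ κ = κ ℋ`. Hence `F^rev = ℋ^rev f = ℋ κ f = ℋ f^rev = F`, and
dually for `G`.

The coefficient of `x^ρ` is also multiplicative on `I_ρ(P)`. It equals `δ` on `f` and `g` by the
degree bounds, and on `ℋ` because `(x - 1) ℋ_{st} = ∑_{s < w ≤ t} κ_{sw} ℋ_{wt}`. Since `F = κ ℋ f`
and `G = g κ ℋ`, it takes the same value on `F`, `G` and `κ`.
-/

open Finset Polynomial
open scoped Classical

noncomputable section

variable {α : Type*}

/-- Convolution product in the incidence algebra of a locally finite poset over `ℤ[x]`.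
Only the values on intervals `s ≤ t` are relevant. -/
def conv [PartialOrder α] [LocallyFiniteOrder α] (a b : α → α → Polynomial ℤ) :
    α → α → Polynomial ℤ :=
  fun s t => ∑ w ∈ Finset.Icc s t, a s w * b w t

/-- The identity `δ` of the incidence algebra. -/
def dlt [PartialOrder α] : α → α → Polynomial ℤ :=
  fun s t => if s = t then 1 else 0

/-- The involution `a ↦ a^rev`, given by `(a^rev)_{st}(x) = x^{ρ_{st}} a_{st}(1/x)`. -/
def rev (ρ : α → α → ℕ) (a : α → α → Polynomial ℤ) : α → α → Polynomial ℤ :=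
  fun s t => (a s t).reflect (ρ s t)

/-- A weak rank function on a poset. -/
structure IsWeakRank [Preorder α] (ρ : α → α → ℕ) : Prop where
  pos : ∀ ⦃s t : α⦄, s < t → 0 < ρ s t
  add : ∀ ⦃s w t : α⦄, s ≤ w → w ≤ t → ρ s t = ρ s w + ρ w t

/-- `κ` is a `(P,ρ)`-kernel: it lies in `I_ρ(P)`, is `1` on the diagonal, and `κ⁻¹ = κ^rev`. -/
structure IsKernel [PartialOrder α] [LocallyFiniteOrder α] (ρ : α → α → ℕ)
    (κ : α → α → Polynomial ℤ) : Prop where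
  degLE : ∀ ⦃s t : α⦄, s ≤ t → (κ s t).natDegree ≤ ρ s t
  diag : ∀ s : α, κ s s = 1
  left : ∀ ⦃s t : α⦄, s ≤ t → conv (rev ρ κ) κ s t = dlt s t
  right : ∀ ⦃s t : α⦄, s ≤ t → conv κ (rev ρ κ) s t = dlt s t

/-- The reduced kernel `κ̄`: `κ̄_{st} = κ_{st}/(x-1)` for `s < t` and `κ̄_{ss} = -1`. -/
def red [PartialOrder α] (κ : α → α → Polynomial ℤ) : α → α → Polynomial ℤ :=
  fun s t => if s = t then -1 else κ s t /ₘ (X - 1)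

/-- `H` is the Chow function of `κ`, i.e. `H = -(κ̄)⁻¹`. -/
structure IsChow [PartialOrder α] [LocallyFiniteOrder α] (κ H : α → α → Polynomial ℤ) : Prop where
  left : ∀ ⦃s t : α⦄, s ≤ t → conv (red κ) H s t = -dlt s t
  right : ∀ ⦃s t : α⦄, s ≤ t → conv H (red κ) s t = -dlt s t

/-- `f` is the right KLS function of the kernel `κ`. -/
structure IsRightKLS [PartialOrder α] [LocallyFiniteOrder α] (ρ : α → α → ℕ)
    (κ f : α → α → Polynomial ℤ) : Prop where
  diag : ∀ s : α, f s s = 1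
  degLT : ∀ ⦃s t : α⦄, s < t → 2 * (f s t).natDegree < ρ s t
  rev_eq : ∀ ⦃s t : α⦄, s ≤ t → rev ρ f s t = conv κ f s t

/-- `g` is the left KLS function of the kernel `κ`. -/
structure IsLeftKLS [PartialOrder α] [LocallyFiniteOrder α] (ρ : α → α → ℕ)
    (κ g : α → α → Polynomial ℤ) : Prop where
  diag : ∀ s : α, g s s = 1
  degLT : ∀ ⦃s t : α⦄, s < t → 2 * (g s t).natDegree < ρ s t
  rev_eq : ∀ ⦃s t : α⦄, s ≤ t → rev ρ g s t = conv g κ s t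

/-- `p` is symmetric with center of symmetry `d/2`, i.e. `p(x) = x^d p(1/x)`. -/
def PolySymm (d : ℕ) (p : Polynomial ℤ) : Prop := p.natDegree ≤ d ∧ p.reflect d = p

/-- All coefficients of `p` are non-negative. -/
def PolyNonneg (p : Polynomial ℤ) : Prop := ∀ n, 0 ≤ p.coeff n

/-- The coefficient sequence of `p` is unimodal. -/
def PolyUnimodal (p : Polynomial ℤ) : Prop :=
  ∃ j, (∀ i < j, p.coeff i ≤ p.coeff (i + 1)) ∧ ∀ i, j ≤ i → p.coeff (i + 1) ≤ p.coeff i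

end

section Polynomial

variable {R : Type*}

lemma reflect_sum [Semiring R] {ι : Type*} (N : ℕ) (S : Finset ι) (p : ι → R[X]) :
    reflect N (∑ i ∈ S, p i) = ∑ i ∈ S, reflect N (p i) := by
  ext n
  simp only [coeff_reflect, finsetSum_coeff]

lemma eval_one_reflect [Semiring R] (N : ℕ) (p : R[X]) : (reflect N p).eval 1 = p.eval 1 := by
  induction p using Polynomial.induction_on' with
  | add p q hp hq => rw [reflect_add, eval_add, eval_add, hp, hq]
  | monomial n c => simp [← C_mul_X_pow_eq_monomial, eval_mul_X_pow]

lemma reflect_X_mul_add [Semiring R] {N : ℕ} {p q : R[X]} (hp : p.natDegree ≤ N)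
    (hq : q.natDegree ≤ N) :
    reflect (1 + N) (X * p + q) = reflect N p + X * reflect N q := by
  have hXp : reflect (1 + N) (X * p) = reflect N p := by
    rw [reflect_mul X p natDegree_X_le hp, reflect_one_X, one_mul]
  have hq' : reflect (1 + N) (1 * q) = X * reflect N q := by
    rw [reflect_mul 1 q (by simp) hq, reflect_one, pow_one]
  rw [reflect_add, hXp, ← hq', one_mul]

lemma natDegree_eq_of_coeff_eq [Semiring R] {p q : R[X]} {n : ℕ} (hp : p.natDegree ≤ n)
    (hq : q.natDegree = n) (h : p.coeff n = q.coeff n) : p.natDegree = n := by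
  rcases eq_or_ne q 0 with rfl | hq0
  · rw [natDegree_zero] at hq
    omega
  · refine natDegree_eq_of_le_of_coeff_ne_zero hp ?_
    rw [h, ← hq]
    exact leadingCoeff_ne_zero.2 hq0

lemma eq_of_X_mul_add_eq [Ring R] {p q : R[X]} (h : X * p + q = X * q + p) : p = q := by
  refine (monic_X_sub_C (1 : R)).isRegular.left ?_
  simp only [map_one, sub_mul, one_mul]
  rw [sub_eq_sub_iff_add_eq_add, h]

lemma natDegree_lt_of_X_mul_eq_add [Ring R] {p q : R[X]} {n : ℕ} (hn : 0 < n)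
    (hq : q.natDegree ≤ n) (h : X * p = p + q) : p.natDegree < n := by
  rcases eq_or_ne p 0 with rfl | hp
  · rwa [natDegree_zero]
  · have : Nontrivial R := (nontrivial_iff (R := R)).1 ⟨p, 0, hp⟩
    have hpq : (X - C 1) * p = q := by
      rw [map_one, sub_mul, one_mul, h, add_sub_cancel_left]
    have hdeg := (monic_X_sub_C (1 : R)).natDegree_mul' hp
    rw [hpq, natDegree_X_sub_C] at hdeg
    omega

end Polynomial

section IncidenceAlgebra

variable {R S α : Type*}

section Map

variable [Preorder α] [LocallyFiniteOrder α] [DecidableEq α]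

/-- The ring homomorphism of incidence algebras that applies `φ` to every value. -/
def incidenceMap [Semiring R] [Semiring S] (φ : R →+* S) :
    IncidenceAlgebra R α →+* IncidenceAlgebra S α where
  toFun a := ⟨fun s t => φ (a s t), fun s t h => by
    rw [IncidenceAlgebra.apply_eq_zero_of_not_le h, map_zero]⟩
  map_one' := by ext s t; simp [apply_ite φ]
  map_zero' := by ext s t; simp
  map_add' a b := by ext s t; simp
  map_mul' a b := by ext s t; simp

lemma incidenceMap_apply [Semiring R] [Semiring S] (φ : R →+* S) (a : IncidenceAlgebra R α)
    (s t : α) : incidenceMap φ a s t = φ (a s t) :=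
  rfl

end Map

lemma eq_one_of_mul_self_eq_one [Ring R] [IsAddTorsionFree R] [PartialOrder α]
    [LocallyFiniteOrder α] [DecidableEq α] {a : IncidenceAlgebra R α}
    (hdiag : ∀ s, a s s = 1) (h : a * a = 1) : a = 1 := by
  suffices key : ∀ (n : ℕ) (s t : α), #(Icc s t) = n → s < t → a s t = 0 by
    ext s t hst
    rcases hst.eq_or_lt with rfl | hlt
    · simp [hdiag]
    · simp [hlt.ne, key _ s t rfl hlt]
  intro n
  induction n using Nat.strong_induction_on with
  | _ n ih =>
    intro s t hn hst
    have hinner : ∑ w ∈ Ioo s t, a s w * a w t = 0 := sum_eq_zero fun w hw => by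
      obtain ⟨hsw, hwt⟩ := mem_Ioo.1 hw
      have hcard := card_lt_card (Icc_ssubset_Icc_right hst.le le_rfl hwt)
      rw [ih _ (hn ▸ hcard) s w rfl hsw, zero_mul]
    have htwo : a s t + a s t = (a * a) s t := by
      rw [IncidenceAlgebra.mul_apply, ← add_sum_Ioc_eq_sum_Icc hst.le,
        ← sum_Ioo_add_eq_sum_Ioc hst, hinner, hdiag, hdiag, one_mul, mul_one, zero_add]
    rwa [h, IncidenceAlgebra.one_apply, if_neg hst.ne, ← two_nsmul, two_nsmul_eq_zero] at htwo

lemma eq_of_X_smul_add_eq [Ring R] [LE α] {a b : IncidenceAlgebra R[X] α}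
    (h : (X : R[X]) • a + b = (X : R[X]) • b + a) : a = b := by
  ext1 s t _
  exact eq_of_X_mul_add_eq (congrArg (fun c : IncidenceAlgebra R[X] α => c s t) h)

end IncidenceAlgebra

section Rank

variable {R α : Type*}

lemma IsWeakRank.apply_self [Preorder α] {ρ : α → α → ℕ} (hρ : IsWeakRank ρ) (s : α) :
    ρ s s = 0 := by
  have := hρ.add (le_refl s) (le_refl s)
  omega

/-- Membership in the subalgebra `I_ρ(P)`. No restriction to `s ≤ t` is needed, since elements of
the incidence algebra vanish at other pairs. -/
def RankBounded [Semiring R] [LE α] (ρ : α → α → ℕ) (a : IncidenceAlgebra R[X] α) : Prop :=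
  ∀ s t, (a s t).natDegree ≤ ρ s t

/-- The involution `a ↦ a^rev` on Mathlib's incidence algebra. -/
noncomputable def rankRev [Semiring R] [LE α] (ρ : α → α → ℕ) (a : IncidenceAlgebra R[X] α) :
    IncidenceAlgebra R[X] α :=
  ⟨fun s t => reflect (ρ s t) (a s t), fun s t h => by
    rw [IncidenceAlgebra.apply_eq_zero_of_not_le h, reflect_zero]⟩

/-- The leading part of an element of `I_ρ(P)`: the coefficient of `x^{ρ_{st}}` in `a_{st}`. -/
noncomputable def topCoeff [Semiring R] [LE α] (ρ : α → α → ℕ) (a : IncidenceAlgebra R[X] α) :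
    IncidenceAlgebra R α :=
  ⟨fun s t => (a s t).coeff (ρ s t), fun s t h => by
    rw [IncidenceAlgebra.apply_eq_zero_of_not_le h, coeff_zero]⟩

lemma rankRev_apply [Semiring R] [LE α] (ρ : α → α → ℕ) (a : IncidenceAlgebra R[X] α) (s t : α) :
    rankRev ρ a s t = reflect (ρ s t) (a s t) :=
  rfl

lemma topCoeff_apply [Semiring R] [LE α] (ρ : α → α → ℕ) (a : IncidenceAlgebra R[X] α)
    (s t : α) : topCoeff ρ a s t = (a s t).coeff (ρ s t) :=
  rfl

lemma rankRev_rankRev [Semiring R] [LE α] (ρ : α → α → ℕ) (a : IncidenceAlgebra R[X] α) :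
    rankRev ρ (rankRev ρ a) = a := by
  ext1 s t _
  rw [rankRev_apply, rankRev_apply, reflect_reflect]

lemma RankBounded.rankRev [Semiring R] [LE α] {ρ : α → α → ℕ} {a : IncidenceAlgebra R[X] α}
    (ha : RankBounded ρ a) : RankBounded ρ (rankRev ρ a) :=
  fun s t => natDegree_reflect_le.trans (max_le le_rfl (ha s t))

/-- The elements of `I_ρ(P)` with leading part `δ`; KLS functions and Chow functions are of this
kind. -/
structure IsRankUnipotent [Semiring R] [Preorder α] (ρ : α → α → ℕ)
    (a : IncidenceAlgebra R[X] α) : Prop where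
  diag : ∀ s, a s s = 1
  natDegree_lt : ∀ ⦃s t⦄, s < t → (a s t).natDegree < ρ s t

variable [PartialOrder α] {ρ : α → α → ℕ}

section Semiring

variable [Semiring R] {a b : IncidenceAlgebra R[X] α}

lemma IsRankUnipotent.rankBounded (ha : IsRankUnipotent ρ a) : RankBounded ρ a := fun s t => by
  by_cases hst : s ≤ t
  · rcases hst.eq_or_lt with rfl | hlt
    · simp [ha.diag]
    · exact (ha.natDegree_lt hlt).le
  · simp [IncidenceAlgebra.apply_eq_zero_of_not_le hst]

lemma IsRankUnipotent.topCoeff_eq_one [DecidableEq α] (hρ : IsWeakRank ρ)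
    (ha : IsRankUnipotent ρ a) : topCoeff ρ a = 1 := by
  ext s t hst
  rw [topCoeff_apply, IncidenceAlgebra.one_apply]
  rcases hst.eq_or_lt with rfl | hlt
  · simp [ha.diag, hρ.apply_self]
  · rw [if_neg hlt.ne, coeff_eq_zero_of_natDegree_lt (ha.natDegree_lt hlt)]

lemma rankBounded_one [DecidableEq α] : RankBounded ρ (1 : IncidenceAlgebra R[X] α) := by
  intro s t
  rw [IncidenceAlgebra.one_apply]
  split_ifs <;> simp

lemma rankRev_one [DecidableEq α] (hρ : IsWeakRank ρ) :
    rankRev ρ (1 : IncidenceAlgebra R[X] α) = 1 := by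
  ext1 s t _
  rw [rankRev_apply, IncidenceAlgebra.one_apply]
  split_ifs with h
  · rw [h, hρ.apply_self, reflect_one, pow_zero]
  · exact reflect_zero

variable [LocallyFiniteOrder α]

lemma RankBounded.mul (hρ : IsWeakRank ρ) (ha : RankBounded ρ a) (hb : RankBounded ρ b) :
    RankBounded ρ (a * b) := fun s t => by
  refine natDegree_sum_le_of_forall_le _ _ fun w hw => ?_
  obtain ⟨hsw, hwt⟩ := mem_Icc.1 hw
  rw [hρ.add hsw hwt]
  exact natDegree_mul_le_of_le (ha s w) (hb w t)

lemma rankRev_mul (hρ : IsWeakRank ρ) (ha : RankBounded ρ a) (hb : RankBounded ρ b) :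
    rankRev ρ (a * b) = rankRev ρ a * rankRev ρ b := by
  ext1 s t _
  rw [rankRev_apply, IncidenceAlgebra.mul_apply, IncidenceAlgebra.mul_apply, reflect_sum]
  refine sum_congr rfl fun w hw => ?_
  obtain ⟨hsw, hwt⟩ := mem_Icc.1 hw
  rw [hρ.add hsw hwt, reflect_mul _ _ (ha s w) (hb w t), rankRev_apply, rankRev_apply]

lemma topCoeff_mul (hρ : IsWeakRank ρ) (ha : RankBounded ρ a) (hb : RankBounded ρ b) :
    topCoeff ρ (a * b) = topCoeff ρ a * topCoeff ρ b := by
  ext1 s t _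
  rw [topCoeff_apply, IncidenceAlgebra.mul_apply, IncidenceAlgebra.mul_apply, finsetSum_coeff]
  refine sum_congr rfl fun w hw => ?_
  obtain ⟨hsw, hwt⟩ := mem_Icc.1 hw
  rw [hρ.add hsw hwt, coeff_mul_add_eq_of_natDegree_le (ha s w) (hb w t),
    topCoeff_apply, topCoeff_apply]

end Semiring

lemma rankRev_X_smul_add [CommSemiring R] {a b c d : IncidenceAlgebra R[X] α}
    (ha : RankBounded ρ a) (hb : RankBounded ρ b) (hc : RankBounded ρ c) (hd : RankBounded ρ d)
    (h : (X : R[X]) • a + b = (X : R[X]) • c + d) :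
    rankRev ρ a + (X : R[X]) • rankRev ρ b = rankRev ρ c + (X : R[X]) • rankRev ρ d := by
  ext1 s t _
  have hst : X * a s t + b s t = X * c s t + d s t :=
    congrArg (fun e : IncidenceAlgebra R[X] α => e s t) h
  have hrev := congrArg (reflect (1 + ρ s t)) hst
  rwa [reflect_X_mul_add (ha s t) (hb s t), reflect_X_mul_add (hc s t) (hd s t)] at hrev

end Rank

section Chow

variable {R α : Type*} [CommRing R] [PartialOrder α] [LocallyFiniteOrder α] [DecidableEq α]
  {ρ : α → α → ℕ} {κ H f g : IncidenceAlgebra R[X] α}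

/-- A `(P,ρ)`-kernel with coefficients in `R`. Applying `rev` to `κ κ^rev = δ` gives
`κ^rev κ = δ`. -/
structure IsRankKernel (ρ : α → α → ℕ) (κ : IncidenceAlgebra R[X] α) : Prop where
  rankBounded : RankBounded ρ κ
  diag : ∀ s, κ s s = 1
  mul_rankRev : κ * rankRev ρ κ = 1

lemma IsRankKernel.eval_one_eq_zero [IsAddTorsionFree R] (hκ : IsRankKernel ρ κ) {s t : α}
    (hst : s < t) : (κ s t).eval 1 = 0 := by
  let evalOne := incidenceMap (α := α) (evalRingHom (1 : R))
  have hrev : evalOne (rankRev ρ κ) = evalOne κ := by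
    ext1 s t _
    exact eval_one_reflect _ _
  have hsq : evalOne κ * evalOne κ = 1 := by
    rw [← map_one evalOne, ← hκ.mul_rankRev, map_mul, hrev]
  have hone : evalOne κ = 1 :=
    eq_one_of_mul_self_eq_one (fun s => by simp [evalOne, incidenceMap_apply, hκ.diag]) hsq
  have hone_st := congrArg (fun a : IncidenceAlgebra R α => a s t) hone
  simpa only [evalOne, incidenceMap_apply, coe_evalRingHom, IncidenceAlgebra.one_apply,
    if_neg hst.ne] using hone_st

/-- `H` is the Chow function `ℋ` of `κ`. Since `κ = x δ + (x - 1) κ̄`, the two equations are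
`κ̄ ℋ = -δ` and `ℋ κ̄ = -δ` multiplied by `x - 1`, rearranged so that no subtraction occurs. -/
structure IsChowFunction (κ H : IncidenceAlgebra R[X] α) : Prop where
  kernel_mul : κ * H + (X : R[X]) • 1 = (X : R[X]) • H + 1
  mul_kernel : H * κ + (X : R[X]) • 1 = (X : R[X]) • H + 1

namespace IsChowFunction

lemma kernel_mul_comm (hH : IsChowFunction κ H) : κ * H = H * κ :=
  add_right_cancel (hH.kernel_mul.trans hH.mul_kernel.symm)

lemma X_mul_apply_of_lt (hκ : IsRankKernel ρ κ) (hH : IsChowFunction κ H) {s t : α} (hst : s < t) :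
    X * H s t = H s t + ∑ w ∈ Ioc s t, κ s w * H w t := by
  have h := congrArg (fun a : IncidenceAlgebra R[X] α => a s t) hH.kernel_mul
  simp only [IncidenceAlgebra.add_apply, IncidenceAlgebra.constSMul_apply, smul_eq_mul,
    IncidenceAlgebra.one_apply, if_neg hst.ne, mul_zero, add_zero] at h
  rw [← h, IncidenceAlgebra.mul_apply, ← add_sum_Ioc_eq_sum_Icc hst.le, hκ.diag, one_mul]

lemma apply_self (hκ : IsRankKernel ρ κ) (hH : IsChowFunction κ H) (s : α) : H s s = 1 := by
  have h := congrArg (fun a : IncidenceAlgebra R[X] α => a s s) hH.kernel_mul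
  simp only [IncidenceAlgebra.add_apply, IncidenceAlgebra.constSMul_apply, smul_eq_mul,
    IncidenceAlgebra.one_apply, IncidenceAlgebra.mul_apply, if_true, Icc_self, sum_singleton,
    hκ.diag, one_mul] at h
  exact eq_of_X_mul_add_eq (h.symm.trans (add_comm _ _))

lemma isRankUnipotent (hρ : IsWeakRank ρ) (hκ : IsRankKernel ρ κ) (hH : IsChowFunction κ H) :
    IsRankUnipotent ρ H := by
  suffices key : ∀ (n : ℕ) (s t : α), ρ s t = n → s < t → (H s t).natDegree < ρ s t from
    ⟨hH.apply_self hκ, fun s t hst => key _ s t rfl hst⟩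
  intro n
  induction n using Nat.strong_induction_on with
  | _ n ih =>
    intro s t hn hst
    refine natDegree_lt_of_X_mul_eq_add (hρ.pos hst) ?_ (hH.X_mul_apply_of_lt hκ hst)
    refine natDegree_sum_le_of_forall_le _ _ fun w hw => ?_
    obtain ⟨hsw, hwt⟩ := mem_Ioc.1 hw
    have hadd := hρ.add hsw.le hwt
    have hpos := hρ.pos hsw
    have hHwt : (H w t).natDegree ≤ ρ w t := by
      rcases hwt.eq_or_lt with rfl | hlt
      · simp [hH.apply_self hκ]
      · exact (ih (ρ w t) (by omega) w t rfl hlt).le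
    rw [hadd]
    exact natDegree_mul_le_of_le (hκ.rankBounded s w) hHwt

lemma rankRev_eq (hρ : IsWeakRank ρ) (hκ : IsRankKernel ρ κ) (hH : IsChowFunction κ H) :
    rankRev ρ H = H * κ := by
  have hHb := (hH.isRankUnipotent hρ hκ).rankBounded
  have hrev : rankRev ρ H + (X : R[X]) • 1 = 1 + (X : R[X]) • (rankRev ρ κ * rankRev ρ H) := by
    have hchow : (X : R[X]) • H + 1 = (X : R[X]) • 1 + κ * H := by
      rw [← hH.kernel_mul, add_comm]
    have := rankRev_X_smul_add hHb rankBounded_one rankBounded_one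
      (hκ.rankBounded.mul hρ hHb) hchow
    rwa [rankRev_one hρ, rankRev_mul hρ hκ.rankBounded hHb] at this
  have hleft : H * κ * rankRev ρ H + (X : R[X]) • (H * κ) =
      H * κ + (X : R[X]) • (H * rankRev ρ H) := by
    have := congrArg (H * κ * ·) hrev
    simpa only [mul_add, mul_smul_comm, mul_one, ← mul_assoc, mul_assoc H κ (rankRev ρ κ),
      hκ.mul_rankRev] using this
  have hright : H * κ * rankRev ρ H + (X : R[X]) • rankRev ρ H =
      (X : R[X]) • (H * rankRev ρ H) + rankRev ρ H := by
    have := congrArg (· * rankRev ρ H) hH.mul_kernel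
    simpa only [add_mul, smul_mul_assoc, one_mul] using this
  refine eq_of_X_smul_add_eq ?_
  linear_combination (norm := module) hright - hleft

end IsChowFunction

lemma rankRev_chow_mul_rankRev (hρ : IsWeakRank ρ) (hκ : IsRankKernel ρ κ)
    (hH : IsChowFunction κ H) (hf : RankBounded ρ f) (hf_rev : rankRev ρ f = κ * f) :
    rankRev ρ (H * rankRev ρ f) = H * rankRev ρ f := by
  have hHb := (hH.isRankUnipotent hρ hκ).rankBounded
  calc rankRev ρ (H * rankRev ρ f) = rankRev ρ H * f := by
        rw [rankRev_mul hρ hHb hf.rankRev, rankRev_rankRev]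
    _ = H * κ * f := by rw [hH.rankRev_eq hρ hκ]
    _ = H * rankRev ρ f := by rw [hf_rev, mul_assoc]

lemma rankRev_rankRev_mul_chow (hρ : IsWeakRank ρ) (hκ : IsRankKernel ρ κ)
    (hH : IsChowFunction κ H) (hg : RankBounded ρ g) (hg_rev : rankRev ρ g = g * κ) :
    rankRev ρ (rankRev ρ g * H) = rankRev ρ g * H := by
  have hHb := (hH.isRankUnipotent hρ hκ).rankBounded
  calc rankRev ρ (rankRev ρ g * H) = g * rankRev ρ H := by
        rw [rankRev_mul hρ hg.rankRev hHb, rankRev_rankRev]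
    _ = g * (κ * H) := by rw [hH.rankRev_eq hρ hκ, hH.kernel_mul_comm]
    _ = rankRev ρ g * H := by rw [hg_rev, mul_assoc]

lemma topCoeff_chow_mul_rankRev (hρ : IsWeakRank ρ) (hκ : IsRankKernel ρ κ)
    (hH : IsChowFunction κ H) (hf : RankBounded ρ f) (hf_rev : rankRev ρ f = κ * f) :
    topCoeff ρ (H * rankRev ρ f) = topCoeff ρ κ * topCoeff ρ f := by
  have hHu := hH.isRankUnipotent hρ hκ
  rw [hf_rev, ← mul_assoc, ← hH.kernel_mul_comm,
    topCoeff_mul hρ (hκ.rankBounded.mul hρ hHu.rankBounded) hf,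
    topCoeff_mul hρ hκ.rankBounded hHu.rankBounded, hHu.topCoeff_eq_one hρ, mul_one]

lemma topCoeff_rankRev_mul_chow (hρ : IsWeakRank ρ) (hκ : IsRankKernel ρ κ)
    (hH : IsChowFunction κ H) (hg : RankBounded ρ g) (hg_rev : rankRev ρ g = g * κ) :
    topCoeff ρ (rankRev ρ g * H) = topCoeff ρ g * topCoeff ρ κ := by
  have hHu := hH.isRankUnipotent hρ hκ
  rw [hg_rev, mul_assoc, topCoeff_mul hρ hg (hκ.rankBounded.mul hρ hHu.rankBounded),
    topCoeff_mul hρ hκ.rankBounded hHu.rankBounded, hHu.topCoeff_eq_one hρ, mul_one]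

theorem augmented_chow_degree_symmetry_general (hρ : IsWeakRank ρ) (hκ : IsRankKernel ρ κ)
    (hH : IsChowFunction κ H) (hf : IsRankUnipotent ρ f) (hf_rev : rankRev ρ f = κ * f)
    (hg : IsRankUnipotent ρ g) (hg_rev : rankRev ρ g = g * κ) (s t : α) :
    (((H * rankRev ρ f) s t).coeff (ρ s t) = (κ s t).coeff (ρ s t) ∧
      ((rankRev ρ g * H) s t).coeff (ρ s t) = (κ s t).coeff (ρ s t)) ∧
    ((κ s t).natDegree = ρ s t →
      ((H * rankRev ρ f) s t).natDegree = ρ s t ∧ ((rankRev ρ g * H) s t).natDegree = ρ s t) ∧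
    ((((H * rankRev ρ f) s t).natDegree ≤ ρ s t ∧
        reflect (ρ s t) ((H * rankRev ρ f) s t) = (H * rankRev ρ f) s t) ∧
      ((rankRev ρ g * H) s t).natDegree ≤ ρ s t ∧
        reflect (ρ s t) ((rankRev ρ g * H) s t) = (rankRev ρ g * H) s t) := by
  have hHb := (hH.isRankUnipotent hρ hκ).rankBounded
  have hF_deg := hHb.mul hρ hf.rankBounded.rankRev s t
  have hG_deg := hg.rankBounded.rankRev.mul hρ hHb s t
  have hF_top : topCoeff ρ (H * rankRev ρ f) = topCoeff ρ κ := by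
    rw [topCoeff_chow_mul_rankRev hρ hκ hH hf.rankBounded hf_rev, hf.topCoeff_eq_one hρ, mul_one]
  have hG_top : topCoeff ρ (rankRev ρ g * H) = topCoeff ρ κ := by
    rw [topCoeff_rankRev_mul_chow hρ hκ hH hg.rankBounded hg_rev, hg.topCoeff_eq_one hρ, one_mul]
  have hF_coeff := congrArg (fun a : IncidenceAlgebra R α => a s t) hF_top
  have hG_coeff := congrArg (fun a : IncidenceAlgebra R α => a s t) hG_top
  have hF_rev := rankRev_chow_mul_rankRev hρ hκ hH hf.rankBounded hf_rev
  have hG_rev := rankRev_rankRev_mul_chow hρ hκ hH hg.rankBounded hg_rev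
  exact ⟨⟨hF_coeff, hG_coeff⟩,
    fun hκ_deg => ⟨natDegree_eq_of_coeff_eq hF_deg hκ_deg hF_coeff,
      natDegree_eq_of_coeff_eq hG_deg hκ_deg hG_coeff⟩,
    ⟨hF_deg, congrArg (fun a : IncidenceAlgebra R[X] α => a s t) hF_rev⟩,
    hG_deg, congrArg (fun a : IncidenceAlgebra R[X] α => a s t) hG_rev⟩

end Chow

section Transfer

variable {α : Type*} [PartialOrder α]

/-- The element of Mathlib's incidence algebra with the values of `a` at the intervals `s ≤ t`. -/
noncomputable def toIncidence {R : Type*} [Zero R] (a : α → α → R) : IncidenceAlgebra R α :=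
  ⟨fun s t => if s ≤ t then a s t else 0, fun _ _ h => if_neg h⟩

lemma toIncidence_apply {R : Type*} [Zero R] (a : α → α → R) {s t : α} (h : s ≤ t) :
    toIncidence a s t = a s t :=
  if_pos h

lemma toIncidence_congr {R : Type*} [Zero R] {a b : α → α → R}
    (h : ∀ ⦃s t : α⦄, s ≤ t → a s t = b s t) : toIncidence a = toIncidence b := by
  ext1 s t hst
  rw [toIncidence_apply a hst, toIncidence_apply b hst, h hst]

lemma toIncidence_dlt : toIncidence (dlt : α → α → ℤ[X]) = 1 := by
  ext1 s t hst
  exact toIncidence_apply _ hst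

lemma toIncidence_rev (ρ : α → α → ℕ) (a : α → α → ℤ[X]) :
    toIncidence (rev ρ a) = rankRev ρ (toIncidence a) := by
  ext1 s t hst
  rw [rankRev_apply, toIncidence_apply _ hst, toIncidence_apply _ hst, rev]

lemma isRankUnipotent_toIncidence {ρ : α → α → ℕ} {a : α → α → ℤ[X]} (hdiag : ∀ s, a s s = 1)
    (hdeg : ∀ ⦃s t : α⦄, s < t → 2 * (a s t).natDegree < ρ s t) :
    IsRankUnipotent ρ (toIncidence a) where
  diag s := by rw [toIncidence_apply _ le_rfl, hdiag]
  natDegree_lt s t hst := by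
    rw [toIncidence_apply _ hst.le]
    exact lt_of_le_of_lt (Nat.le_mul_of_pos_left _ two_pos) (hdeg hst)

variable [LocallyFiniteOrder α]

lemma toIncidence_conv (a b : α → α → ℤ[X]) :
    toIncidence (conv a b) = toIncidence a * toIncidence b := by
  ext1 s t hst
  rw [toIncidence_apply _ hst, IncidenceAlgebra.mul_apply]
  refine sum_congr rfl fun w hw => ?_
  obtain ⟨hsw, hwt⟩ := mem_Icc.1 hw
  rw [toIncidence_apply a hsw, toIncidence_apply b hwt]

variable {ρ : α → α → ℕ} {κ H : α → α → ℤ[X]}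

lemma IsKernel.isRankKernel (hκ : IsKernel ρ κ) : IsRankKernel ρ (toIncidence κ) where
  rankBounded s t := by
    by_cases hst : s ≤ t
    · rw [toIncidence_apply _ hst]
      exact hκ.degLE hst
    · simp [IncidenceAlgebra.apply_eq_zero_of_not_le hst]
  diag s := by rw [toIncidence_apply _ le_rfl, hκ.diag]
  mul_rankRev := by
    rw [← toIncidence_rev, ← toIncidence_conv, ← toIncidence_dlt]
    exact toIncidence_congr hκ.right

lemma IsKernel.X_sub_one_mul_red (hκ : IsKernel ρ κ) {s t : α} (hst : s < t) :
    (X - 1) * red κ s t = κ s t := by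
  have hroot := hκ.isRankKernel.eval_one_eq_zero hst
  rw [toIncidence_apply _ hst.le] at hroot
  rw [red, if_neg hst.ne]
  simpa only [map_one] using mul_divByMonic_eq_iff_isRoot.2 hroot

lemma IsKernel.toIncidence_eq (hκ : IsKernel ρ κ) :
    toIncidence κ = (X : ℤ[X]) • 1 + (X - 1 : ℤ[X]) • toIncidence (red κ) := by
  ext1 s t hst
  rw [IncidenceAlgebra.add_apply, IncidenceAlgebra.constSMul_apply,
    IncidenceAlgebra.constSMul_apply, toIncidence_apply _ hst, toIncidence_apply _ hst,
    IncidenceAlgebra.one_apply, smul_eq_mul, smul_eq_mul]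
  rcases hst.eq_or_lt with rfl | hlt
  · simp [red, hκ.diag]
  · rw [if_neg hlt.ne, hκ.X_sub_one_mul_red hlt, mul_zero, zero_add]

lemma toIncidence_mul_eq_neg_one {a b : α → α → ℤ[X]}
    (h : ∀ ⦃s t : α⦄, s ≤ t → conv a b s t = -dlt s t) :
    toIncidence a * toIncidence b = -1 := by
  rw [← toIncidence_conv, ← toIncidence_dlt]
  ext1 s t hst
  rw [IncidenceAlgebra.neg_apply, toIncidence_apply _ hst, toIncidence_apply _ hst, h hst]

lemma IsChow.isChowFunction (hκ : IsKernel ρ κ) (hH : IsChow κ H) :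
    IsChowFunction (toIncidence κ) (toIncidence H) where
  kernel_mul := by
    rw [hκ.toIncidence_eq, add_mul, smul_mul_assoc, smul_mul_assoc, one_mul,
      toIncidence_mul_eq_neg_one hH.left]
    module
  mul_kernel := by
    rw [hκ.toIncidence_eq, mul_add, mul_smul_comm, mul_smul_comm, mul_one,
      toIncidence_mul_eq_neg_one hH.right]
    module

end Transfer

/-- Proposition 3.15: for the augmented Chow functions `F = ℋ·f^rev` and `G = g^rev·ℋ`:
(i) `[x^{ρ_{st}}] F_{st} = [x^{ρ_{st}}] G_{st} = [x^{ρ_{st}}] κ_{st}`, and if `κ` is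
non-degenerate then `deg F_{st} = deg G_{st} = ρ_{st}`; (ii) `F` and `G` are symmetric:
`F_{st}(x) = x^{ρ_{st}} F_{st}(1/x)` and `G_{st}(x) = x^{ρ_{st}} G_{st}(1/x)`. -/
theorem augmented_chow_degree_symmetry [PartialOrder α] [LocallyFiniteOrder α]
    (ρ : α → α → ℕ) (hρ : IsWeakRank ρ)
    (κ : α → α → Polynomial ℤ) (hκ : IsKernel ρ κ)
    (H : α → α → Polynomial ℤ) (hH : IsChow κ H)
    (f : α → α → Polynomial ℤ) (hf : IsRightKLS ρ κ f)
    (g : α → α → Polynomial ℤ) (hg : IsLeftKLS ρ κ g) :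
    (∀ s t : α, s ≤ t →
      (conv H (rev ρ f) s t).coeff (ρ s t) = (κ s t).coeff (ρ s t) ∧
      (conv (rev ρ g) H s t).coeff (ρ s t) = (κ s t).coeff (ρ s t)) ∧
    ((∀ s t : α, s ≤ t → (κ s t).natDegree = ρ s t) →
      ∀ s t : α, s ≤ t →
        (conv H (rev ρ f) s t).natDegree = ρ s t ∧
        (conv (rev ρ g) H s t).natDegree = ρ s t) ∧
    (∀ s t : α, s ≤ t →
      PolySymm (ρ s t) (conv H (rev ρ f) s t) ∧
      PolySymm (ρ s t) (conv (rev ρ g) H s t)) := by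
  have h (s t : α) := augmented_chow_degree_symmetry_general hρ hκ.isRankKernel
    (hH.isChowFunction hκ) (isRankUnipotent_toIncidence hf.diag hf.degLT)
    (by rw [← toIncidence_rev, ← toIncidence_conv, toIncidence_congr hf.rev_eq])
    (isRankUnipotent_toIncidence hg.diag hg.degLT)
    (by rw [← toIncidence_rev, ← toIncidence_conv, toIncidence_congr hg.rev_eq]) s t
  simp only [← toIncidence_rev, ← toIncidence_conv] at h
  exact ⟨fun s t hst => by simpa only [toIncidence_apply _ hst] using (h s t).1,
    fun hdeg s t hst => by simpa only [toIncidence_apply _ hst] using (h s t).2.1 (by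
      rw [toIncidence_apply _ hst, hdeg s t hst]),
    fun s t hst => by simpa only [PolySymm, toIncidence_apply _ hst] using (h s t).2.2⟩
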